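/- arXiv:2509.25880 — 4 statements merged into one kernel-verified Lean document; each statement's English description precedes it below -/
import Mathlib

section
/- Let S and E be nonempty sets and let Ω be a set of functions from E × ℕ to S. If Ω is determinable, then Ω has an iterator. -/
/-- `star ω t` is the "state profile" ω*(t) : E → S, i.e. `e ↦ ω (e, t)`. -/
def star {E S : Type*} (ω : E × ℕ → S) (t : ℕ) : E → S := fun e => ω (e, t)

/-- The consistency context of `ω` up to `t` inside `Ω`. -/
def CC {E S : Type*} (Ω : Set (E × ℕ → S)) (ω : E × ℕ → S) (t : ℕ) :
    Set (E × ℕ → S) :=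
  {ω' | ω' ∈ Ω ∧ ∀ e : E, ∀ t' ≤ t, ω' (e, t') = ω (e, t')}

/-- `Ω` is determinable: whenever `ω*(t) = ω'*(t')` there is a monotone bijection
`τ : t⁺ → t'⁺` such that the restrictions to `t⁺` of the `ωx*` for `ωx ∈ C(ω,t,Ω)`
coincide with the restrictions to `t'⁺` composed with `τ` of the `ωx*` for
`ωx ∈ C(ω',t',Ω)`. -/
def Determinable {E S : Type*} (Ω : Set (E × ℕ → S)) : Prop :=
  ∀ ω ∈ Ω, ∀ ω' ∈ Ω, ∀ t t' : ℕ, star ω t = star ω' t' →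
    ∃ τ : {n : ℕ // t ≤ n} → {n : ℕ // t' ≤ n},
      Monotone τ ∧ Function.Bijective τ ∧
      {f : {n : ℕ // t ≤ n} → E → S | ∃ ωx ∈ CC Ω ω t, f = fun n => star ωx n.val} =
      {f : {n : ℕ // t ≤ n} → E → S |
        ∃ ωx ∈ CC Ω ω' t', f = (fun n : {n : ℕ // t' ≤ n} => star ωx n.val) ∘ τ}

/-- `A`, the set of all state profiles occurring in `Ω`. -/
def StateSet {E S : Type*} (Ω : Set (E × ℕ → S)) : Set (E → S) :=
  {a | ∃ ω ∈ Ω, ∃ t : ℕ, star ω t = a}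

/-- `Ω` has an iterator: there is `i : A → 𝒫(A)` such that for all `ω ∈ Ω` and `t`,
`{ωx*(t+1) | ωx ∈ C(ω,t,Ω)} = i(ω*(t))`. -/
def HasIterator {E S : Type*} (Ω : Set (E × ℕ → S)) : Prop :=
  ∃ i : StateSet Ω → Set (StateSet Ω),
    ∀ ω (hω : ω ∈ Ω) (t : ℕ),
      {a : E → S | ∃ ωx ∈ CC Ω ω t, star ωx (t + 1) = a} =
        Subtype.val '' i ⟨star ω t, ⟨ω, hω, t, rfl⟩⟩

theorem determinable_hasIterator {E S : Type*} [Nonempty E] [Nonempty S]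
    (Ω : Set (E × ℕ → S)) (hΩ : Determinable Ω) : HasIterator Ω := by
  classical
  refine ⟨fun a => {b | ∃ ω ∈ Ω, ∃ t : ℕ, star ω t = a.val ∧
    ∃ ωx ∈ CC Ω ω t, star ωx (t + 1) = b.val}, ?_⟩
  intro ω hω t
  ext a
  constructor
  · rintro ⟨ωx, hx, rfl⟩
    exact ⟨⟨star ωx (t + 1), ωx, hx.1, t + 1, rfl⟩, ⟨ω, hω, t, rfl, ωx, hx, rfl⟩, rfl⟩
  · rintro ⟨b, ⟨ω', hω', t', hs, ωx, hx, hb⟩, rfl⟩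
    obtain ⟨τ, hmono, hbij, hset⟩ := hΩ ω hω ω' hω' t t' hs.symm
    have key : (τ ⟨t + 1, Nat.le_succ t⟩).val = t' + 1 := by
      obtain ⟨m, hm⟩ := hbij.2 ⟨t', le_rfl⟩
      obtain ⟨n, hn⟩ := hbij.2 ⟨t' + 1, Nat.le_succ t'⟩
      have h0 : τ ⟨t, le_rfl⟩ = ⟨t', le_rfl⟩ := by
        apply le_antisymm
        · rw [← hm]
          exact hmono m.2
        · exact (τ ⟨t, le_rfl⟩).2
      have hnt : n.val ≠ t := by
        intro h
        have h1 : n = ⟨t, le_rfl⟩ := Subtype.ext h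
        rw [h1, h0] at hn
        have := congrArg Subtype.val hn
        simp at this
      have h2 : τ ⟨t + 1, Nat.le_succ t⟩ ≤ τ n := by
        apply hmono
        have := n.2
        change t + 1 ≤ n.val
        omega
      rw [hn] at h2
      have h3 : (τ ⟨t + 1, Nat.le_succ t⟩).val ≤ t' + 1 := h2
      have h4 : (τ ⟨t + 1, Nat.le_succ t⟩).val ≠ t' := by
        intro h
        have h5 := hbij.1 ((Subtype.ext h : τ ⟨t + 1, Nat.le_succ t⟩ = ⟨t', le_rfl⟩).trans h0.symm)
        have := congrArg Subtype.val h5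
        simp at this
      have h6 := (τ ⟨t + 1, Nat.le_succ t⟩).2
      omega
    have hmem : (fun n : {n : ℕ // t' ≤ n} => star ωx n.val) ∘ τ ∈
        {f : {n : ℕ // t ≤ n} → E → S | ∃ ωx ∈ CC Ω ω t, f = fun n => star ωx n.val} := by
      rw [hset]
      exact ⟨ωx, hx, rfl⟩
    obtain ⟨ωy, hy, hf⟩ := hmem
    refine ⟨ωy, hy, ?_⟩
    have h7 := congrFun hf ⟨t + 1, Nat.le_succ t⟩
    simp only [Function.comp, key] at h7
    rw [← h7, hb]
end

section
/- Let S and E be nonempty sets and let Ω be a determinable set of functions from E × ℕ to S. If ω, ω' ∈ Ω and t, t' ∈ ℕ satisfy ω*(t) = ω'*(t'), then {ω̃*(t+1) | ω̃ ∈ C(ω, t, Ω)} = {ω̃*(t'+1) | ω̃ ∈ C(ω', t', Ω)}; consequently, the relation assigning to each state profile a ∈ (E → S) of the form a = ω*(t) the set {ω̃*(t+1) | ω̃ ∈ C(ω, t, Ω)} is well-defined (independent of the choice of ω and t representing a). -/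
theorem determinable_nextStates_welldefined {E S : Type*} [Nonempty E] [Nonempty S]
    (Ω : Set (E × ℕ → S)) (hΩ : Determinable Ω)
    (ω ω' : E × ℕ → S) (hω : ω ∈ Ω) (hω' : ω' ∈ Ω) (t t' : ℕ)
    (h : star ω t = star ω' t') :
    {a : E → S | ∃ ωx ∈ CC Ω ω t, star ωx (t + 1) = a} =
      {a : E → S | ∃ ωx ∈ CC Ω ω' t', star ωx (t' + 1) = a} := by
  obtain ⟨τ, hm, ⟨hinj, hsurj⟩, hset⟩ := hΩ ω hω ω' hω' t t' h
  have h0 : (τ ⟨t, le_refl t⟩).val = t' := by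
    obtain ⟨a, ha⟩ := hsurj ⟨t', le_refl t'⟩
    have h1 : τ ⟨t, le_refl t⟩ ≤ τ a := hm (Subtype.mk_le_mk.mpr a.2)
    rw [ha] at h1
    exact le_antisymm h1 (τ ⟨t, le_refl t⟩).2
  have h1 : (τ ⟨t + 1, Nat.le_succ t⟩).val = t' + 1 := by
    apply le_antisymm
    · obtain ⟨b, hb⟩ := hsurj ⟨t' + 1, Nat.le_succ t'⟩
      have hne : b.val ≠ t := by
        intro hbt
        have hbe : b = ⟨t, le_refl t⟩ := Subtype.ext hbt
        rw [← hbe, hb] at h0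
        simp at h0
      have hle : t + 1 ≤ b.val := by
        have := b.2
        omega
      have h2 : τ ⟨t + 1, Nat.le_succ t⟩ ≤ τ b := hm (Subtype.mk_le_mk.mpr hle)
      rw [hb] at h2
      exact h2
    · have hne : (τ ⟨t + 1, Nat.le_succ t⟩).val ≠ t' := by
        intro he
        have := hinj (Subtype.ext (he.trans h0.symm))
        simp at this
      have := (τ ⟨t + 1, Nat.le_succ t⟩).2
      omega
  ext a
  constructor
  · rintro ⟨x, hx, rfl⟩
    obtain ⟨y, hy, hxy⟩ := hset.subset ⟨x, hx, rfl⟩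
    have h2 := congrFun hxy ⟨t + 1, Nat.le_succ t⟩
    simp only [Function.comp, h1] at h2
    exact ⟨y, hy, h2.symm⟩
  · rintro ⟨y, hy, rfl⟩
    obtain ⟨x, hx, hxy⟩ := hset.superset ⟨y, hy, rfl⟩
    have h2 := congrFun hxy ⟨t + 1, Nat.le_succ t⟩
    simp only [Function.comp, h1] at h2
    exact ⟨x, hx, h2.symm⟩
end

section
/- Let M = ⟨W, R, V⟩ be a Kripke model and let Q be modal equivalence on W. Then for every world w ∈ W and every modal formula φ: M, w ⊨ □φ if and only if for every world w'' ∈ W such that there exist a, b ∈ W with a Q w, b Q w'', and a R b, it holds that M, w'' ⊨ φ. -/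
/-- Modal formulas over a set `P` of propositional atoms. -/
inductive Formula (P : Type*) where
  | atom : P → Formula P
  | falsum : Formula P
  | impl : Formula P → Formula P → Formula P
  | box : Formula P → Formula P
  | dia : Formula P → Formula P

/-- Kripke satisfaction `M, w ⊨ φ` for the model with accessibility `R` and
valuation `V`. -/
def Sat {W P : Type*} (R : W → W → Prop) (V : P → Set W) :
    W → Formula P → Prop
  | w, .atom p => w ∈ V p
  | _, .falsum => False
  | w, .impl φ ψ => Sat R V w φ → Sat R V w ψ
  | w, .box φ => ∀ w', R w w' → Sat R V w' φ
  | w, .dia φ => ∃ w', R w w' ∧ Sat R V w' φ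

/-- Modal equivalence: two worlds satisfy exactly the same formulas. -/
def ModEq {W P : Type*} (R : W → W → Prop) (V : P → Set W) (w w' : W) : Prop :=
  ∀ φ : Formula P, Sat R V w φ ↔ Sat R V w' φ

theorem box_iff_modEq_successors {W P : Type*}
    (R : W → W → Prop) (V : P → Set W) (w : W) (φ : Formula P) :
    Sat R V w (Formula.box φ) ↔
      ∀ w'' : W, (∃ a b : W, ModEq R V a w ∧ ModEq R V b w'' ∧ R a b) →
        Sat R V w'' φ := by
  constructor
  · rintro h w'' ⟨a, b, ha, hb, hab⟩
    have h1 : Sat R V a (Formula.box φ) := (ha _).2 h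
    simp only [Sat] at h1
    exact (hb φ).1 (h1 b hab)
  · intro h
    simp only [Sat]
    intro w' hw
    exact h w' ⟨w, w', fun _ => Iff.rfl, fun _ => Iff.rfl, hw⟩
end

section
/- Let M = ⟨W, R, V⟩ be a Kripke model and let Q be modal equivalence on W. Then for every world w ∈ W and every modal formula φ: M, w ⊨ ◇φ if and only if there exists a world w'' ∈ W such that there exist a, b ∈ W with a Q w, b Q w'', and a R b, and M, w'' ⊨ φ. -/
theorem dia_iff_modEq_successors {W P : Type*}
    (R : W → W → Prop) (V : P → Set W) (w : W) (φ : Formula P) :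
    Sat R V w (Formula.dia φ) ↔
      ∃ w'' : W, (∃ a b : W, ModEq R V a w ∧ ModEq R V b w'' ∧ R a b) ∧
        Sat R V w'' φ := by
  constructor
  · intro h
    rw [Sat] at h
    obtain ⟨w', hR, hφ⟩ := h
    exact ⟨w', ⟨w, w', fun _ => Iff.rfl, fun _ => Iff.rfl, hR⟩, hφ⟩
  · rintro ⟨w'', ⟨a, b, ha, hb, hR⟩, hφ⟩
    refine (ha (Formula.dia φ)).mp ?_
    rw [Sat]
    exact ⟨b, hR, (hb φ).mpr hφ⟩
end
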